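/- arXiv:2601.10526 — 2 statements merged into one kernel-verified Lean document; each statement's English description precedes it below -/
import Mathlib

section
/- Let p ∈ [0,1], let n, kX, kY ∈ ℕ, let G be a kX × n matrix and H a kY × n matrix over ZMod 2, and let k = min(rank G, rank H). Then there exists a channel κ : ((Fin k → ZMod 2) × (Fin k → ZMod 2)) → PMF ((Fin kX → ZMod 2) × (Fin kY → ZMod 2)) such that for each q ∈ {p, 1−p}, the pushforward through κ of DSBS(q)^⊗k equals the law of (G.mulVec x, H.mulVec y) under DSBS(q)^⊗n. (Truncation is the best linear code for testing DSBS(p) versus DSBS(1−p): (X^k, Y^k) is better in the Blackwell order than (G X^n, H Y^n).) -/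
/-!
The pair `(G X, H Y)` is unchanged when `(X, Y)` is replaced by `(X + g, Y + h)` with `g ∈ ker G` and
`h ∈ ker H`.  This translation adds `u = g + h` to the noise `Z = X + Y`, so on the support of `u`
it exchanges `DSBS(1 - p)` with `DSBS(p)`.  Hence the law of `(G X, H Y)` under `DSBS(1 - p)^⊗n` does
not change if the coordinates in the support of `u` are distributed as `DSBS(p)` instead, and those
coordinates can be simulated without knowing the hypothesis.

Choose `g, h` so that the support of `u` is as large as possible.  A nonzero vector of `ker G`
(or of `ker H`) vanishing on that support could be added to `g` (or `h`), enlarging the support;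
so `G` and `H` are both injective on vectors supported where `u = 0` (`card_zeros_le_rank`).
There are therefore at most `k = min (rank G) (rank H)` such coordinates, and they can be filled with
distinct coordinates of `(Xᵏ, Yᵏ)`.  The channel fills them so, draws the others from `DSBS(p)`,
and applies `G` and `H`; `bind_overlay_apply` computes the resulting law before `G` and `H`.
-/

open scoped ENNReal

/-- The mass function of `DSBS(p)^⊗n`. -/
noncomputable def dsbsMass (p : ℝ) (n : ℕ)
    (xy : (Fin n → ZMod 2) × (Fin n → ZMod 2)) : ℝ≥0∞ :=
  ∏ ℓ : Fin n, (1 / 2 : ℝ≥0∞) *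
    (if xy.1 ℓ ≠ xy.2 ℓ then ENNReal.ofReal p else ENNReal.ofReal (1 - p))

/-- The mass function of a single pair distributed as `DSBS(q)`. -/
noncomputable def pairMass (q : ℝ) (b : ZMod 2 × ZMod 2) : ℝ≥0∞ :=
  (1 / 2 : ℝ≥0∞) * (if b.1 ≠ b.2 then ENNReal.ofReal q else ENNReal.ofReal (1 - q))

theorem dsbsMass_eq_prod (q : ℝ) (n : ℕ) (xy : (Fin n → ZMod 2) × (Fin n → ZMod 2)) :
    dsbsMass q n xy = ∏ i, pairMass q (xy.1 i, xy.2 i) := rfl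

theorem sum_pairMass {q : ℝ} (hq : q ∈ Set.Icc (0 : ℝ) 1) : ∑ b, pairMass q b = 1 := by
  have h1 : ENNReal.ofReal q + ENNReal.ofReal (1 - q) = 1 := by
    rw [← ENNReal.ofReal_add hq.1 (by linarith [hq.2])]; simp
  have h2 : ∀ f : ZMod 2 → ℝ≥0∞, ∑ x, f x = f 0 + f 1 := fun f => Fin.sum_univ_two f
  rw [Fintype.sum_prod_type, h2, h2, h2]
  simp only [pairMass, ne_eq, not_true_eq_false, if_false, zero_ne_one, one_ne_zero,
    not_false_eq_true, if_true]
  rw [← mul_add, ← mul_add, add_comm (ENNReal.ofReal (1 - q)), h1, ← mul_add]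
  norm_num [ENNReal.inv_mul_cancel, one_add_one_eq_two]

/-- Under a product mass, coordinatewise constraints are independent. -/
theorem sum_prod_of_forall {n : ℕ} (w : ZMod 2 × ZMod 2 → ℝ≥0∞)
    (P : Fin n → ZMod 2 × ZMod 2 → Prop) [∀ i, DecidablePred (P i)] :
    (∑ xy : (Fin n → ZMod 2) × (Fin n → ZMod 2),
      if ∀ i, P i (xy.1 i, xy.2 i) then ∏ i, w (xy.1 i, xy.2 i) else 0)
      = ∏ i, ∑ b, if P i b then w b else 0 := by
  classical
  rw [Finset.prod_univ_sum, Fintype.piFinset_univ]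
  refine Fintype.sum_equiv (Equiv.arrowProdEquivProdArrow (Fin n) (fun _ => ZMod 2)
    (fun _ => ZMod 2)).symm _ _ fun xy => ?_
  rw [Finset.prod_ite_zero]
  simp [Equiv.arrowProdEquivProdArrow]

/-- The vector `x` with its entries at the zeros of `u` overwritten by entries of `a`, as
prescribed by `e`. -/
def overlay {n k : ℕ} (u : Fin n → ZMod 2) (e : {i // u i = 0} ↪ Fin k)
    (a : Fin k → ZMod 2) (x : Fin n → ZMod 2) : Fin n → ZMod 2 :=
  fun i => if hi : u i = 0 then a (e ⟨i, hi⟩) else x i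

theorem overlay_pair_eq_iff {n k : ℕ} (u : Fin n → ZMod 2) (e : {i // u i = 0} ↪ Fin k)
    (a : (Fin k → ZMod 2) × (Fin k → ZMod 2)) (x z : (Fin n → ZMod 2) × (Fin n → ZMod 2)) :
    z = (overlay u e a.1 x.1, overlay u e a.2 x.2) ↔
      (∀ j, ∀ s, e s = j → (a.1 j, a.2 j) = (z.1 s, z.2 s)) ∧
        (∀ i, u i ≠ 0 → (x.1 i, x.2 i) = (z.1 i, z.2 i)) := by
  constructor
  · rintro rfl
    constructor
    · rintro j ⟨i, hi⟩ rfl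
      simp [overlay, hi]
    · intro i hi
      simp [overlay, hi]
  · rintro ⟨h1, h2⟩
    ext i
    all_goals
      by_cases hi : u i = 0
      · have := h1 _ ⟨i, hi⟩ rfl
        simp_all [overlay]
      · have := h2 i hi
        simp_all [overlay]

/-- Overlaying `DSBS(q)^⊗k` on `DSBS(p)^⊗n` gives independent pairs, distributed as `DSBS(q)` at
the zeros of `u` and as `DSBS(p)` elsewhere. -/
theorem bind_overlay_apply {n k : ℕ} {p q : ℝ} (hp : p ∈ Set.Icc (0 : ℝ) 1)
    (hq : q ∈ Set.Icc (0 : ℝ) 1) (u : Fin n → ZMod 2) (e : {i // u i = 0} ↪ Fin k)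
    (μ : PMF ((Fin k → ZMod 2) × (Fin k → ZMod 2))) (hμ : ∀ xy, μ xy = dsbsMass q k xy)
    (ν : PMF ((Fin n → ZMod 2) × (Fin n → ZMod 2))) (hν : ∀ xy, ν xy = dsbsMass p n xy)
    (z : (Fin n → ZMod 2) × (Fin n → ZMod 2)) :
    (μ.bind fun a => ν.map fun x => (overlay u e a.1 x.1, overlay u e a.2 x.2)) z =
      ∏ i, if u i = 0 then pairMass q (z.1 i, z.2 i) else pairMass p (z.1 i, z.2 i) := by
  classical
  have hA : (∏ j : Fin k, ∑ b, if ∀ s, e s = j → b = (z.1 s, z.2 s) then pairMass q b else 0)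
      = ∏ s : {i // u i = 0}, pairMass q (z.1 s, z.2 s) := by
    symm
    refine Fintype.prod_of_injective e e.injective _ _ (fun j hj => ?_) (fun s => ?_)
    · have : ∀ s, e s ≠ j := fun s hs => hj ⟨s, hs⟩
      simp [this, sum_pairMass hq]
    · simp
  have hB : (∏ i : Fin n, ∑ b, if u i ≠ 0 → b = (z.1 i, z.2 i) then pairMass p b else 0)
      = ∏ i, if u i = 0 then 1 else pairMass p (z.1 i, z.2 i) := by
    refine Finset.prod_congr rfl fun i _ => ?_
    by_cases hi : u i = 0 <;> simp [hi, sum_pairMass hp]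
  have hS : (∏ s : {i // u i = 0}, pairMass q (z.1 s, z.2 s))
      = ∏ i, if u i = 0 then pairMass q (z.1 i, z.2 i) else 1 := by
    rw [← Finset.prod_filter]
    exact (Finset.prod_subtype _ (by simp) fun i => pairMass q (z.1 i, z.2 i)).symm
  have hL : (μ.bind fun a => ν.map fun x => (overlay u e a.1 x.1, overlay u e a.2 x.2)) z =
      (∑ a : (Fin k → ZMod 2) × (Fin k → ZMod 2),
        if ∀ j, ∀ s, e s = j → (a.1 j, a.2 j) = (z.1 s, z.2 s)
          then ∏ j, pairMass q (a.1 j, a.2 j) else 0) *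
      (∑ x : (Fin n → ZMod 2) × (Fin n → ZMod 2),
        if ∀ i, u i ≠ 0 → (x.1 i, x.2 i) = (z.1 i, z.2 i)
          then ∏ i, pairMass p (x.1 i, x.2 i) else 0) := by
    rw [PMF.bind_apply, tsum_fintype, Finset.sum_mul_sum]
    refine Finset.sum_congr rfl fun a _ => ?_
    rw [PMF.map_apply, tsum_fintype, Finset.mul_sum]
    refine Finset.sum_congr rfl fun x _ => ?_
    rw [hμ, hν, dsbsMass_eq_prod, dsbsMass_eq_prod]
    simp only [overlay_pair_eq_iff, ite_and, mul_ite, ite_mul, mul_zero, zero_mul]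
    split_ifs <;> rfl
  rw [hL, sum_prod_of_forall (pairMass q) fun j b => ∀ s, e s = j → b = (z.1 s, z.2 s),
    sum_prod_of_forall (pairMass p) fun i b => u i ≠ 0 → b = (z.1 i, z.2 i), hA, hB, hS,
    ← Finset.prod_mul_distrib]
  refine Finset.prod_congr rfl fun i _ => ?_
  split_ifs <;> simp

/-- If no nonzero vector of `ker M` vanishes on the support of `u`, then `u` has at most `rank M`
zeros. -/
theorem card_zeros_le_rank {m n : ℕ} (M : Matrix (Fin m) (Fin n) (ZMod 2)) (u : Fin n → ZMod 2)
    (hM : ∀ v : Fin n → ZMod 2, M.mulVec v = 0 → (∀ i, u i ≠ 0 → v i = 0) → v = 0) :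
    Fintype.card {i // u i = 0} ≤ M.rank := by
  classical
  let E : ({i // u i = 0} → ZMod 2) →ₗ[ZMod 2] (Fin n → ZMod 2) :=
    Function.ExtendByZero.linearMap (ZMod 2) Subtype.val
  have hE : ∀ (c : {i // u i = 0} → ZMod 2) (s : {i // u i = 0}), E c s = c s := fun c s =>
    Subtype.val_injective.extend_apply c 0 s
  have hE0 : ∀ (c : {i // u i = 0} → ZMod 2) i, u i ≠ 0 → E c i = 0 := fun c i hi =>
    Function.extend_apply' c (0 : Fin n → ZMod 2) i (by rintro ⟨s, rfl⟩; exact hi s.2)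
  have hinj : Function.Injective (M.mulVecLin ∘ₗ E) := by
    rw [← LinearMap.ker_eq_bot, LinearMap.ker_eq_bot']
    intro c hc
    have h0 := hM (E c) hc (hE0 c)
    ext s
    rw [← hE c s, h0]; rfl
  have h1 := LinearMap.finrank_range_of_inj hinj
  rw [Module.finrank_fintype_fun_eq_card] at h1
  rw [← h1]
  exact Submodule.finrank_mono (LinearMap.range_comp_le_range _ _)

/-- If adding `v`, which vanishes on the support of `u`, does not enlarge that support, then
`v = 0`. -/
theorem eq_zero_of_card_support_le {n : ℕ} (u v : Fin n → ZMod 2)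
    (hv : ∀ i, u i ≠ 0 → v i = 0)
    (hcard : (Finset.univ.filter fun i => (u + v) i ≠ 0).card ≤
      (Finset.univ.filter fun i => u i ≠ 0).card) : v = 0 := by
  have hsub : (Finset.univ.filter fun i => u i ≠ 0) ⊆
      Finset.univ.filter fun i => (u + v) i ≠ 0 := by
    intro i hi
    simp only [Finset.mem_filter, Finset.mem_univ, true_and] at hi ⊢
    simpa [hv i hi] using hi
  have heq := Finset.eq_of_subset_of_card_le hsub hcard
  ext i
  by_cases hi : u i = 0
  · by_contra hvi
    have : i ∈ Finset.univ.filter fun i => u i ≠ 0 := by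
      rw [heq]; simpa [hi] using hvi
    simp [hi] at this
  · exact hv i hi

/-- Translating a `DSBS(1 - p)` pair by `(c, d)` turns it into a `DSBS(p)` pair exactly when
`c + d ≠ 0`. -/
theorem pairMass_translate (p : ℝ) (x y c d : ZMod 2) :
    pairMass (1 - p) (x + c, y + d) =
      if c + d = 0 then pairMass (1 - p) (x, y) else pairMass p (x, y) := by
  have h : (x + c ≠ y + d) ↔ ((x ≠ y) ↔ (c + d = 0)) := by
    revert x y c d; decide
  simp only [pairMass, h]
  by_cases hcd : c + d = 0 <;> by_cases hxy : x = y <;> simp [hcd, hxy]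

/-- Truncation is the best linear code for testing `DSBS(p)` versus `DSBS(1-p)`:
with `k = min(rank G, rank H)`, the truncated observation `(Xᵏ, Yᵏ)` is better in the
Blackwell order than `(G Xⁿ, H Yⁿ)`, i.e. a single channel `κ` maps `DSBS(q)^⊗k` to the
law of `(G Xⁿ, H Yⁿ)` under `DSBS(q)^⊗n` for both `q = p` and `q = 1-p`. -/
theorem truncation_best_linear_opposite
    (p : ℝ) (hp : p ∈ Set.Icc (0 : ℝ) 1) (n kX kY : ℕ)
    (G : Matrix (Fin kX) (Fin n) (ZMod 2)) (H : Matrix (Fin kY) (Fin n) (ZMod 2))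
    (k : ℕ) (hk : k = min G.rank H.rank)
    (μp μq : PMF ((Fin k → ZMod 2) × (Fin k → ZMod 2)))
    (hμp : ∀ xy, μp xy = dsbsMass p k xy)
    (hμq : ∀ xy, μq xy = dsbsMass (1 - p) k xy)
    (νp νq : PMF ((Fin n → ZMod 2) × (Fin n → ZMod 2)))
    (hνp : ∀ xy, νp xy = dsbsMass p n xy)
    (hνq : ∀ xy, νq xy = dsbsMass (1 - p) n xy) :
    ∃ κ : ((Fin k → ZMod 2) × (Fin k → ZMod 2)) →
        PMF ((Fin kX → ZMod 2) × (Fin kY → ZMod 2)),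
      μp.bind κ = νp.map (fun xy => (G.mulVec xy.1, H.mulVec xy.2)) ∧
      μq.bind κ = νq.map (fun xy => (G.mulVec xy.1, H.mulVec xy.2)) := by
  classical
  have hp' : 1 - p ∈ Set.Icc (0 : ℝ) 1 := ⟨by linarith [hp.2], by linarith [hp.1]⟩
  obtain ⟨⟨g, h⟩, hgh, hmax⟩ := Finset.exists_max_image
    (Finset.univ.filter fun gh : (Fin n → ZMod 2) × (Fin n → ZMod 2) =>
      G.mulVec gh.1 = 0 ∧ H.mulVec gh.2 = 0)
    (fun gh => (Finset.univ.filter fun i => (gh.1 + gh.2) i ≠ 0).card)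
    ⟨(0, 0), by simp⟩
  simp only [Finset.mem_filter, Finset.mem_univ, true_and] at hgh hmax
  obtain ⟨hg, hh⟩ := hgh
  set u : Fin n → ZMod 2 := g + h with hu
  have hG : Fintype.card {i // u i = 0} ≤ G.rank := by
    refine card_zeros_le_rank G u fun v hv hvu => eq_zero_of_card_support_le u v hvu ?_
    have := hmax (g + v, h) ⟨by rw [Matrix.mulVec_add, hg, hv, add_zero], hh⟩
    rwa [show u + v = g + v + h by rw [hu]; abel]
  have hH : Fintype.card {i // u i = 0} ≤ H.rank := by
    refine card_zeros_le_rank H u fun v hv hvu => eq_zero_of_card_support_le u v hvu ?_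
    have := hmax (g, h + v) ⟨hg, by rw [Matrix.mulVec_add, hh, hv, add_zero]⟩
    rwa [show u + v = g + (h + v) by rw [hu]; abel]
  obtain ⟨e⟩ : Nonempty ({i // u i = 0} ↪ Fin k) :=
    Function.Embedding.nonempty_of_card_le (by
      rw [Fintype.card_fin, hk]; exact le_min hG hH)
  let F : (Fin n → ZMod 2) × (Fin n → ZMod 2) → (Fin kX → ZMod 2) × (Fin kY → ZMod 2) :=
    fun xy => (G.mulVec xy.1, H.mulVec xy.2)
  let K : (Fin k → ZMod 2) × (Fin k → ZMod 2) → PMF ((Fin n → ZMod 2) × (Fin n → ZMod 2)) :=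
    fun a => νp.map fun x => (overlay u e a.1 x.1, overlay u e a.2 x.2)
  have hKp : μp.bind K = νp := by
    ext z
    rw [bind_overlay_apply hp hp u e μp hμp νp hνp z, hνp, dsbsMass_eq_prod]
    simp
  have hKq : μq.bind K = νq.map fun xy => (xy.1 + g, xy.2 + h) := by
    ext z
    -- In characteristic two the translation by `(g, h)` is an involution.
    have hinv : ∀ a : (Fin n → ZMod 2) × (Fin n → ZMod 2),
        z = (a.1 + g, a.2 + h) ↔ a = (z.1 + g, z.2 + h) := by
      intro a
      constructor <;> rintro rfl <;> ext i <;> simp [add_assoc, CharTwo.add_self_eq_zero]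
    rw [bind_overlay_apply hp hp' u e μq hμq νp hνp z, PMF.map_apply]
    simp only [hinv, tsum_ite_eq]
    rw [hνq, dsbsMass_eq_prod]
    refine Finset.prod_congr rfl fun i _ => ?_
    exact (pairMass_translate p (z.1 i) (z.2 i) (g i) (h i)).symm
  refine ⟨fun a => (K a).map F, ?_, ?_⟩
  · rw [← PMF.map_bind, hKp]
  · rw [← PMF.map_bind, hKq, PMF.map_comp]
    congr 1
    funext xy
    simp [F, Matrix.mulVec_add, hg, hh]
end

section
/- Let p ∈ (0,1). Define q : ℝ → ℝ by q(α) = α ∗ (α ∗ p), where a ∗ b = a·(1 − b) + b·(1 − a), and let H denote the binary entropy function H(t) = −t·log t − (1 − t)·log(1 − t) (natural logarithm). Then the ratio of derivatives (d/dα)[H(q(α))] / (d/dα)[H(α)] tends to 0 as α tends to 1/2 from within (0, 1/2). (Consequently the Stein-exponent curve of Han's scheme for testing against independence, R ↦ E_Han(R), has derivative 0 at rate R = 1.) -/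
/-!
Write `q α = α ∗ (α ∗ p)`, so that `1 - 2 q α = (1 - 2α)² (1 - 2p)`. By the chain rule the
numerator is `L (q α) * (2 (1 - 2α) (1 - 2p))`, where `L t = log (1 - t) - log t` is the derivative
of the binary entropy, and the denominator is `L α`.
The inequality `1 - x⁻¹ ≤ log x` gives `0 < 1 - 2α ≤ L α` on `(0, 1/2)`, so the zero of the
denominator at `1/2` is absorbed by the factor `1 - 2α`: the ratio is at most
`|L (q α) * (2 (1 - 2p))|` in absolute value. This tends to `|L (1/2) * (2 (1 - 2p))| = 0`,
because `q` is continuous with `q (1/2) = 1/2`.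
-/

/-- Binary convolution `a ∗ b = a(1-b) + b(1-a)`. -/
def conv (a b : ℝ) : ℝ := a * (1 - b) + b * (1 - a)

lemma conv_mem_Ioo {a b : ℝ} (ha : a ∈ Set.Ioo (0 : ℝ) 1) (hb : b ∈ Set.Ioo (0 : ℝ) 1) :
    conv a b ∈ Set.Ioo (0 : ℝ) 1 := by
  obtain ⟨ha0, ha1⟩ := ha
  obtain ⟨hb0, hb1⟩ := hb
  unfold conv
  constructor
  · nlinarith [mul_pos ha0 (sub_pos.2 hb1), mul_pos hb0 (sub_pos.2 ha1)]
  · nlinarith [mul_pos ha0 hb0, mul_pos (sub_pos.2 ha1) (sub_pos.2 hb1)]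

lemma hasDerivAt_conv_conv (p α : ℝ) :
    HasDerivAt (fun a => conv a (conv a p)) (2 * (1 - 2 * α) * (1 - 2 * p)) α := by
  have h : (fun a => conv a (conv a p)) = fun a => 1 / 2 - (1 - 2 * a) ^ 2 * (1 - 2 * p) / 2 := by
    funext a
    unfold conv
    ring
  rw [h]
  have h1 : HasDerivAt (fun a : ℝ => 1 - 2 * a) (-(2 * 1)) α :=
    ((hasDerivAt_id α).const_mul 2).const_sub 1
  have h2 := (((h1.pow 2).mul_const (1 - 2 * p)).div_const 2).const_sub (1 / 2)
  refine h2.congr_deriv ?_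
  norm_num
  ring

lemma one_sub_two_mul_le_log_sub_log {α : ℝ} (hα : α ∈ Set.Ioo (0 : ℝ) (1 / 2)) :
    1 - 2 * α ≤ Real.log (1 - α) - Real.log α := by
  obtain ⟨h0, h1⟩ := hα
  have h2 : 0 < 1 - α := by linarith
  rw [← Real.log_div h2.ne' h0.ne']
  refine le_trans ?_ (Real.one_sub_inv_le_log_of_pos (div_pos h2 h0))
  rw [inv_div, le_sub_comm, div_le_iff₀ h2]
  nlinarith

/-- With `q(α) = α ∗ (α ∗ p)`, the ratio of derivatives
`(d/dα)[H(q(α))] / (d/dα)[H(α)]` (natural-log binary entropy `H`) tends to `0` as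
`α → 1/2` from within `(0, 1/2)`.  Consequently Han's Stein-exponent curve
`R ↦ E_Han(R)` for testing against independence has derivative `0` at rate `R = 1`. -/
theorem han_exponent_derivative_zero (p : ℝ) (hp : p ∈ Set.Ioo (0 : ℝ) 1) :
    Filter.Tendsto
      (fun α : ℝ =>
        deriv (fun a => Real.binEntropy (conv a (conv a p))) α / deriv Real.binEntropy α)
      (nhdsWithin (1 / 2) (Set.Ioo (0 : ℝ) (1 / 2))) (nhds 0) := by
  have hdom : ∀ᶠ α in nhdsWithin (1 / 2 : ℝ) (Set.Ioo (0 : ℝ) (1 / 2)),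
      ‖deriv (fun a => Real.binEntropy (conv a (conv a p))) α / deriv Real.binEntropy α‖ ≤
        |(Real.log (1 - conv α (conv α p)) - Real.log (conv α (conv α p))) *
          (2 * (1 - 2 * p))| := by
    filter_upwards [self_mem_nhdsWithin] with α hα
    have hα' : α ∈ Set.Ioo (0 : ℝ) 1 := ⟨hα.1, by linarith [hα.2]⟩
    have hq := conv_mem_Ioo hα' (conv_mem_Ioo hα' hp)
    have hd := (Real.hasDerivAt_binEntropy hq.1.ne' hq.2.ne).comp α (hasDerivAt_conv_conv p α)
    have hnum := hd.deriv
    simp only [Function.comp_def] at hnum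
    rw [hnum, Real.deriv_binEntropy, Real.norm_eq_abs, abs_div]
    have hle := one_sub_two_mul_le_log_sub_log hα
    have hu : 0 < 1 - 2 * α := by linarith [hα.2]
    have hL := hu.trans_le hle
    rw [abs_of_pos hL, div_le_iff₀ hL]
    calc _ = |(Real.log (1 - conv α (conv α p)) - Real.log (conv α (conv α p))) *
          (2 * (1 - 2 * p)) * (1 - 2 * α)| := by congr 1; ring
      _ = |(Real.log (1 - conv α (conv α p)) - Real.log (conv α (conv α p))) *
          (2 * (1 - 2 * p))| * (1 - 2 * α) := by rw [abs_mul, abs_of_pos hu]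
      _ ≤ _ := mul_le_mul_of_nonneg_left hle (abs_nonneg _)
  refine squeeze_zero_norm' hdom ?_
  have hhalf : conv (1 / 2) (conv (1 / 2) p) = 1 / 2 := by
    unfold conv
    ring
  have hc : ContinuousAt (fun α => conv α (conv α p)) (1 / 2) :=
    (hasDerivAt_conv_conv p (1 / 2)).continuousAt
  have hlim : ContinuousAt (fun α =>
      |(Real.log (1 - conv α (conv α p)) - Real.log (conv α (conv α p))) *
        (2 * (1 - 2 * p))|) (1 / 2) :=
    ((((hc.const_sub 1).log (by beta_reduce; rw [hhalf]; norm_num)).sub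
      (hc.log (by rw [hhalf]; norm_num))).mul_const _).abs
  have ht := hlim.tendsto.mono_left
    (nhdsWithin_le_nhds (s := Set.Ioo (0 : ℝ) (1 / 2)))
  have hzero : Real.log (1 - 1 / 2) - Real.log (1 / 2) = 0 := by norm_num
  rwa [hhalf, hzero, zero_mul, abs_zero] at ht
end
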